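/- Assume all matrices X ∈ 𝒞 have the same trace R > 0 and that there exists a positive definite X ∈ 𝒞. Let Y ∈ ℳ_p, let μ ∈ ℝ^m and S = C − 𝒜*(μ), and assume 2 S Y ∈ T_Yℳ_p. Let Ỹ = [Y | 0] ∈ ℝ^{n×(p+1)} be Y padded with one zero column, so Ỹ ∈ ℳ_{p+1}, and let λ = inf{2⟨Ż, S Ż⟩ : Ż ∈ T_Ỹℳ_{p+1}, ‖Ż‖ = 1}. Then 0 ≤ 2(Tr(C Y Yᵀ) − f*) ≤ −R λ, with no explicit control of ‖2 S Y‖ required. -/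

import Mathlib

/-!
Passing from `C` to `S = C - 𝒜*(μ)` changes the cost by a constant on the feasible set, so
`f(Y) - Tr(C X) = Tr(S Y Yᵀ) - Tr(S X)` for every feasible `X`. Two facts bound the right side.

* At the padded point `Ỹ` every direction `[0 | z]` is tangent, because it only meets the zero
  column of `Ỹ`. Hence `2 S ⪰ λ I`, and `2 Tr(S X) ≥ λ Tr X = λ R`.
* A positive definite feasible point can be moved slightly along any symmetric `V` with `𝒜(V) = 0`,
  so constancy of the trace forces `Tr V = 0`. Taking `V = 2 (S Y Yᵀ + Y Yᵀ Sᵀ)`, which lies in the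
  kernel of `𝒜` since `2 S Y` is tangent, gives `Tr(S Y Yᵀ) = 0`.
-/

open Matrix MeasureTheory

noncomputable section

/-- Frobenius inner product `⟨A, B⟩ = Tr(Aᵀ B)`. -/
def frobInner {n p : ℕ} (A B : Matrix (Fin n) (Fin p) ℝ) : ℝ := (Aᵀ * B).trace

/-- Frobenius norm. -/
def frobNorm {n p : ℕ} (A : Matrix (Fin n) (Fin p) ℝ) : ℝ := Real.sqrt (frobInner A A)

/-- The constraint map 𝒜, `𝒜(X) i = Tr(A i * X)`. -/
def Aop {n m : ℕ} (A : Fin m → Matrix (Fin n) (Fin n) ℝ) (X : Matrix (Fin n) (Fin n) ℝ) :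
    Fin m → ℝ := fun i => (A i * X).trace

/-- The adjoint 𝒜*, `𝒜*(μ) = ∑ i, μ i • A i`. -/
def Aadj {n m : ℕ} (A : Fin m → Matrix (Fin n) (Fin n) ℝ) (μ : Fin m → ℝ) :
    Matrix (Fin n) (Fin n) ℝ := ∑ i, μ i • A i

/-- The SDP feasible set 𝒞. -/
def sdpFeas {n m : ℕ} (A : Fin m → Matrix (Fin n) (Fin n) ℝ) (b : Fin m → ℝ) :
    Set (Matrix (Fin n) (Fin n) ℝ) := {X | X.IsSymm ∧ Aop A X = b ∧ X.PosSemidef}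

/-- Optimal value `f* = inf {Tr(C X) : X ∈ 𝒞}` of the SDP. -/
def fstar {n m : ℕ} (A : Fin m → Matrix (Fin n) (Fin n) ℝ) (b : Fin m → ℝ)
    (C : Matrix (Fin n) (Fin n) ℝ) : ℝ := sInf ((fun X => (C * X).trace) '' sdpFeas A b)

/-- The factorized feasible set `ℳ_p = {Y : 𝒜(Y Yᵀ) = b}`. -/
def facFeas {n m : ℕ} (A : Fin m → Matrix (Fin n) (Fin n) ℝ) (b : Fin m → ℝ) (p : ℕ) :
    Set (Matrix (Fin n) (Fin p) ℝ) := {Y | Aop A (Y * Yᵀ) = b}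

/-- Tangent space `T_Yℳ = {Ydot : 𝒜(Ydot Yᵀ + Y Ydotᵀ) = 0}`. -/
def tangentSet {n m p : ℕ} (A : Fin m → Matrix (Fin n) (Fin n) ℝ)
    (Y : Matrix (Fin n) (Fin p) ℝ) : Set (Matrix (Fin n) (Fin p) ℝ) :=
  {Ydot | Aop A (Ydot * Yᵀ + Y * Ydotᵀ) = 0}

/-- Second-order critical point of the factorized problem. -/
def IsSOCP {n m p : ℕ} (A : Fin m → Matrix (Fin n) (Fin n) ℝ) (b : Fin m → ℝ)
    (C : Matrix (Fin n) (Fin n) ℝ) (Y : Matrix (Fin n) (Fin p) ℝ) : Prop :=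
  Y ∈ facFeas A b p ∧ ∃ μ : Fin m → ℝ,
    (C - Aadj A μ) * Y = 0 ∧
    ∀ Ydot ∈ tangentSet A Y, 0 ≤ frobInner Ydot ((C - Aadj A μ) * Ydot)

/-- The real vector space of symmetric `n × n` matrices. -/
def symmSpace (n : ℕ) : Submodule ℝ (Matrix (Fin n) (Fin n) ℝ) where
  carrier := {X | X.IsSymm}
  add_mem' := fun ha hb => ha.add hb
  zero_mem' := Matrix.isSymm_zero
  smul_mem' := fun c X hX => by
    show (c • X)ᵀ = c • X
    rw [Matrix.transpose_smul, hX]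

instance (n : ℕ) : MeasurableSpace ↥(symmSpace n) := borel _

/-- A set of symmetric matrices is null if it has measure zero for every additive Haar
measure on the finite-dimensional real vector space of symmetric `n × n` matrices. -/
def IsNullSymmSet (n : ℕ) (S : Set (Matrix (Fin n) (Fin n) ℝ)) : Prop :=
  ∀ μ : Measure ↥(symmSpace n), μ.IsAddHaarMeasure →
    μ {C : ↥(symmSpace n) | (C : Matrix (Fin n) (Fin n) ℝ) ∈ S} = 0

section Semidefinite

open scoped ComplexOrder MatrixOrder

variable {ι 𝕜 : Type*} [RCLike 𝕜]

lemma exists_algebraMap_le_of_isHermitian [Fintype ι] [DecidableEq ι] {V : Matrix ι ι 𝕜}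
    (hV : V.IsHermitian) : ∃ c : ℝ, algebraMap ℝ (Matrix ι ι 𝕜) c ≤ V := by
  have hcpt : IsCompact (spectrum ℝ V) := isCompact_iff_compactSpace.mpr inferInstance
  obtain ⟨c, hc⟩ := hcpt.bddBelow
  exact ⟨c, (algebraMap_le_iff_le_spectrum hV.isSelfAdjoint).mpr fun _ hx => hc hx⟩

lemma exists_pos_algebraMap_le_of_posDef [Fintype ι] [DecidableEq ι] {X : Matrix ι ι 𝕜}
    (hX : X.PosDef) : ∃ r > 0, algebraMap ℝ (Matrix ι ι 𝕜) r ≤ X := by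
  rcases isEmpty_or_nonempty ι with _ | _
  · exact ⟨1, one_pos, (Subsingleton.elim _ _).le⟩
  · exact (CFC.exists_pos_algebraMap_le_iff hX.isHermitian.isSelfAdjoint).mpr
      fun _ hx => hX.isStrictlyPositive.spectrum_pos hx

lemma exists_pos_posSemidef_add_smul [Finite ι] {X V : Matrix ι ι 𝕜} (hX : X.PosDef)
    (hV : V.IsHermitian) : ∃ e : ℝ, 0 < e ∧ (X + e • V).PosSemidef := by
  classical
  have := Fintype.ofFinite ι
  obtain ⟨r, hr, hrX⟩ := exists_pos_algebraMap_le_of_posDef hX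
  obtain ⟨c, hcV⟩ := exists_algebraMap_le_of_isHermitian hV
  obtain ⟨e, he, hscalar⟩ : ∃ e : ℝ, 0 < e ∧ 0 ≤ r + e * c := by
    refine ⟨r / (|c| + 1), by positivity, ?_⟩
    calc 0 ≤ r / (|c| + 1) * (|c| + 1 + c) := by
          have := neg_abs_le c
          exact mul_nonneg (by positivity) (by linarith)
      _ = r + r / (|c| + 1) * c := by field_simp
  refine ⟨e, he, nonneg_iff_posSemidef.mp ?_⟩
  calc (0 : Matrix ι ι 𝕜)
      ≤ algebraMap ℝ _ (r + e * c) := algebraMap_nonneg _ hscalar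
    _ = algebraMap ℝ _ r + e • algebraMap ℝ _ c := by rw [map_add, map_mul, Algebra.smul_def]
    _ ≤ X + e • V := by gcongr

end Semidefinite

lemma trace_mul_nonneg_of_dotProduct_mulVec_nonneg {ι : Type*} [Fintype ι] {W X : Matrix ι ι ℝ}
    (hW : ∀ x, 0 ≤ x ⬝ᵥ W *ᵥ x) (hX : X.PosSemidef) : 0 ≤ (W * X).trace := by
  obtain ⟨k, v, rfl⟩ := posSemidef_iff_eq_sum_vecMulVec.mp hX
  rw [Finset.mul_sum, trace_sum]
  refine Finset.sum_nonneg fun i _ => ?_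
  rw [mul_vecMulVec, trace_vecMulVec, star_trivial, dotProduct_comm]
  exact hW (v i)

section Frobenius

variable {n q : ℕ}

lemma frobInner_self_nonneg (Z : Matrix (Fin n) (Fin q) ℝ) : 0 ≤ frobInner Z Z := by
  simpa [frobInner] using (posSemidef_conjTranspose_mul_self Z).trace_nonneg

lemma frobInner_self_eq_zero {Z : Matrix (Fin n) (Fin q) ℝ} : frobInner Z Z = 0 ↔ Z = 0 := by
  simpa [frobInner] using trace_conjTranspose_mul_self_eq_zero_iff (A := Z)

lemma frobInner_smul_smul (r s : ℝ) (Y Z : Matrix (Fin n) (Fin q) ℝ) :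
    frobInner (r • Y) (s • Z) = r * s * frobInner Y Z := by
  simp [frobInner, mul_assoc, mul_left_comm]

lemma frobNorm_eq_one_iff {Z : Matrix (Fin n) (Fin q) ℝ} : frobNorm Z = 1 ↔ frobInner Z Z = 1 :=
  Real.sqrt_eq_one

open scoped MatrixOrder in
lemma exists_mul_frobInner_self_le (S : Matrix (Fin n) (Fin n) ℝ) :
    ∃ c : ℝ, ∀ Z : Matrix (Fin n) (Fin q) ℝ, c * frobInner Z Z ≤ 2 * frobInner Z (S * Z) := by
  obtain ⟨c, hc⟩ := exists_algebraMap_le_of_isHermitian (V := S + Sᵀ)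
    (by simpa using isSymm_add_transpose_self S)
  refine ⟨c, fun Z => ?_⟩
  have hpsd := ((le_iff.mp hc).conjTranspose_mul_mul_same Z).trace_nonneg
  have hSt : (Zᵀ * Sᵀ * Z).trace = frobInner Z (S * Z) := by
    rw [← trace_transpose, frobInner]
    simp [Matrix.mul_assoc]
  have hexpand : (Zᴴ * (S + Sᵀ - algebraMap ℝ _ c) * Z).trace
      = 2 * frobInner Z (S * Z) - c * frobInner Z Z := by
    simp only [conjTranspose_eq_transpose_of_trivial, Matrix.mul_sub, Matrix.mul_add,
      Matrix.sub_mul, Matrix.add_mul, trace_sub, trace_add, hSt, Algebra.algebraMap_eq_smul_one,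
      Matrix.mul_smul, Matrix.smul_mul, Matrix.mul_one, trace_smul, smul_eq_mul]
    rw [frobInner, frobInner, Matrix.mul_assoc]
    ring
  linarith

end Frobenius

section AppendCol

variable {ι α : Type*} {q : ℕ}

/-- The matrix `[Y | v]`. The padding of `Y` by a zero column is `appendCol Y 0`. -/
def appendCol (Y : Matrix ι (Fin q) α) (v : ι → α) : Matrix ι (Fin (q + 1)) α :=
  of fun i => Fin.snoc (Y i) (v i)

lemma appendCol_mul_transpose_appendCol [NonUnitalNonAssocSemiring α]
    (Y Z : Matrix ι (Fin q) α) (u v : ι → α) :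
    appendCol Y u * (appendCol Z v)ᵀ = Y * Zᵀ + vecMulVec u v := by
  ext i j
  simp [appendCol, mul_apply, Fin.sum_univ_castSucc, vecMulVec_apply]

lemma mul_appendCol {κ : Type*} [Fintype ι] [NonUnitalNonAssocSemiring α] (S : Matrix κ ι α)
    (Y : Matrix ι (Fin q) α) (v : ι → α) :
    S * appendCol Y v = appendCol (S * Y) (S *ᵥ v) := by
  ext i j
  refine Fin.lastCases ?_ (fun j => ?_) j <;> simp [appendCol, mul_apply, mulVec, dotProduct]

lemma frobInner_appendCol {n : ℕ} (Y Z : Matrix (Fin n) (Fin q) ℝ) (u v : Fin n → ℝ) :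
    frobInner (appendCol Y u) (appendCol Z v) = frobInner Y Z + u ⬝ᵥ v := by
  simp [frobInner, appendCol, trace, mul_apply, Fin.sum_univ_castSucc, dotProduct]

end AppendCol

section ConstraintMap

variable {n m q : ℕ} {A : Fin m → Matrix (Fin n) (Fin n) ℝ} {b : Fin m → ℝ}

lemma Aop_add (A : Fin m → Matrix (Fin n) (Fin n) ℝ) (X V : Matrix (Fin n) (Fin n) ℝ) :
    Aop A (X + V) = Aop A X + Aop A V := by
  ext i
  simp [Aop, Matrix.mul_add]

lemma Aop_smul (A : Fin m → Matrix (Fin n) (Fin n) ℝ) (r : ℝ) (X : Matrix (Fin n) (Fin n) ℝ) :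
    Aop A (r • X) = r • Aop A X := by
  ext i
  simp [Aop]

lemma trace_Aadj_mul (A : Fin m → Matrix (Fin n) (Fin n) ℝ) (μ : Fin m → ℝ)
    (X : Matrix (Fin n) (Fin n) ℝ) : (Aadj A μ * X).trace = μ ⬝ᵥ Aop A X := by
  simp [Aadj, Aop, Matrix.sum_mul, trace_sum, dotProduct]

lemma mul_transpose_self_mem_sdpFeas {Y : Matrix (Fin n) (Fin q) ℝ} (hY : Y ∈ facFeas A b q) :
    Y * Yᵀ ∈ sdpFeas A b :=
  ⟨by simp [IsSymm], hY, by simpa using posSemidef_self_mul_conjTranspose Y⟩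

lemma smul_mem_tangentSet {Y Z : Matrix (Fin n) (Fin q) ℝ} (hZ : Z ∈ tangentSet A Y) (r : ℝ) :
    r • Z ∈ tangentSet A Y := by
  have hsmul : r • Z * Yᵀ + Y * (r • Z)ᵀ = r • (Z * Yᵀ + Y * Zᵀ) := by simp
  have hAop : Aop A (Z * Yᵀ + Y * Zᵀ) = 0 := hZ
  change Aop A _ = 0
  rw [hsmul, Aop_smul, hAop, smul_zero]

lemma appendCol_zero_mem_facFeas {Y : Matrix (Fin n) (Fin q) ℝ} (hY : Y ∈ facFeas A b q) :
    appendCol Y 0 ∈ facFeas A b (q + 1) := by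
  simpa [facFeas, appendCol_mul_transpose_appendCol] using hY

lemma appendCol_zero_left_mem_tangentSet (A : Fin m → Matrix (Fin n) (Fin n) ℝ)
    (Y : Matrix (Fin n) (Fin q) ℝ) (z : Fin n → ℝ) :
    appendCol 0 z ∈ tangentSet A (appendCol Y 0) := by
  ext i
  simp [Aop, appendCol_mul_transpose_appendCol]

lemma map_eq_zero_of_forall_mem_sdpFeas_map_eq {E : Type*} [AddCommGroup E] [Module ℝ E]
    (φ : Matrix (Fin n) (Fin n) ℝ →ₗ[ℝ] E) {r : E} (hφ : ∀ X ∈ sdpFeas A b, φ X = r)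
    (hpd : ∃ X ∈ sdpFeas A b, X.PosDef)
    {V : Matrix (Fin n) (Fin n) ℝ} (hV : V.IsSymm) (hAV : Aop A V = 0) : φ V = 0 := by
  obtain ⟨X, hX, hXpd⟩ := hpd
  obtain ⟨e, he, hpsd⟩ := exists_pos_posSemidef_add_smul hXpd (isHermitian_iff_isSymm.mpr hV)
  have hmem : X + e • V ∈ sdpFeas A b :=
    ⟨hX.1.add (hV.smul e), by simp [Aop_add, Aop_smul, hX.2.1, hAV], hpsd⟩
  have hsmul : e • φ V = 0 := by simpa [hφ X hX] using hφ _ hmem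
  exact (smul_eq_zero.mp hsmul).resolve_left he.ne'

lemma trace_mul_transpose_eq_zero_of_mem_tangentSet {R : ℝ}
    (htrace : ∀ X ∈ sdpFeas A b, X.trace = R) (hpd : ∃ X ∈ sdpFeas A b, X.PosDef)
    {Y Z : Matrix (Fin n) (Fin q) ℝ} (hZ : Z ∈ tangentSet A Y) : (Z * Yᵀ).trace = 0 := by
  have hsymm : (Z * Yᵀ + Y * Zᵀ).IsSymm := by
    simpa using isSymm_add_transpose_self (Z * Yᵀ)
  have hsum : (Z * Yᵀ + Y * Zᵀ).trace = 0 :=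
    map_eq_zero_of_forall_mem_sdpFeas_map_eq (traceLinearMap _ ℝ ℝ) htrace hpd hsymm hZ
  have hswap : (Y * Zᵀ).trace = (Z * Yᵀ).trace := by
    rw [← trace_transpose, transpose_mul, transpose_transpose]
  rw [trace_add, hswap] at hsum
  linarith

end ConstraintMap

section MinCurvature

variable {n m q : ℕ} {A : Fin m → Matrix (Fin n) (Fin n) ℝ}

/-- The infimum of `2⟨Ż, S Ż⟩` over the unit tangent vectors `Ż` at `Y`, which is the `λ` of the
optimality gap bound when `Y` is the padded point `Ỹ`. If there is no unit tangent vector, it is `0`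
by the convention `sInf ∅ = 0`. -/
def minCurvature (A : Fin m → Matrix (Fin n) (Fin n) ℝ) (S : Matrix (Fin n) (Fin n) ℝ)
    (Y : Matrix (Fin n) (Fin q) ℝ) : ℝ :=
  sInf {t : ℝ | ∃ Zdot ∈ tangentSet A Y, frobNorm Zdot = 1 ∧ t = 2 * frobInner Zdot (S * Zdot)}

lemma minCurvature_le {S : Matrix (Fin n) (Fin n) ℝ} {Y Z : Matrix (Fin n) (Fin q) ℝ}
    (hZ : Z ∈ tangentSet A Y) (hnorm : frobNorm Z = 1) :
    minCurvature A S Y ≤ 2 * frobInner Z (S * Z) := by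
  obtain ⟨c, hc⟩ := exists_mul_frobInner_self_le (q := q) S
  refine csInf_le ⟨c, ?_⟩ ⟨Z, hZ, hnorm, rfl⟩
  rintro _ ⟨W, -, hW, rfl⟩
  simpa [frobNorm_eq_one_iff.mp hW] using hc W

lemma minCurvature_mul_frobInner_self_le {S : Matrix (Fin n) (Fin n) ℝ}
    {Y Z : Matrix (Fin n) (Fin q) ℝ} (hZ : Z ∈ tangentSet A Y) :
    minCurvature A S Y * frobInner Z Z ≤ 2 * frobInner Z (S * Z) := by
  rcases (frobInner_self_nonneg Z).eq_or_lt with h0 | hpos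
  · obtain rfl := frobInner_self_eq_zero.mp h0.symm
    simp [frobInner]
  · set r := frobNorm Z
    have hrpos : 0 < r := Real.sqrt_pos.mpr hpos
    have hrr : r * r = frobInner Z Z := Real.mul_self_sqrt hpos.le
    have hnorm : frobNorm (r⁻¹ • Z) = 1 := by
      rw [frobNorm_eq_one_iff, frobInner_smul_smul, ← hrr]
      field_simp
    have hle := minCurvature_le (S := S) (smul_mem_tangentSet hZ r⁻¹) hnorm
    rw [Matrix.mul_smul, frobInner_smul_smul] at hle
    calc minCurvature A S Y * frobInner Z Z
        ≤ 2 * (r⁻¹ * r⁻¹ * frobInner Z (S * Z)) * frobInner Z Z := by gcongr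
      _ = 2 * frobInner Z (S * Z) := by rw [← hrr]; field_simp

lemma minCurvature_appendCol_mul_dotProduct_self_le (A : Fin m → Matrix (Fin n) (Fin n) ℝ)
    (S : Matrix (Fin n) (Fin n) ℝ) (Y : Matrix (Fin n) (Fin q) ℝ) (z : Fin n → ℝ) :
    minCurvature A S (appendCol Y 0) * (z ⬝ᵥ z) ≤ 2 * (z ⬝ᵥ S *ᵥ z) := by
  have h := minCurvature_mul_frobInner_self_le (S := S) (appendCol_zero_left_mem_tangentSet A Y z)
  rw [mul_appendCol, frobInner_appendCol, frobInner_appendCol] at h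
  simpa [frobInner] using h

lemma minCurvature_appendCol_mul_trace_le (A : Fin m → Matrix (Fin n) (Fin n) ℝ)
    (S : Matrix (Fin n) (Fin n) ℝ) (Y : Matrix (Fin n) (Fin q) ℝ)
    {X : Matrix (Fin n) (Fin n) ℝ} (hX : X.PosSemidef) :
    minCurvature A S (appendCol Y 0) * X.trace ≤ 2 * (S * X).trace := by
  set lam := minCurvature A S (appendCol Y 0)
  have hquad (x : Fin n → ℝ) : 0 ≤ x ⬝ᵥ ((2 : ℝ) • S - lam • 1) *ᵥ x := by
    simpa [sub_mulVec, smul_mulVec, dotProduct_sub] using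
      minCurvature_appendCol_mul_dotProduct_self_le A S Y x
  simpa [Matrix.sub_mul] using trace_mul_nonneg_of_dotProduct_mulVec_nonneg hquad hX

end MinCurvature

section OptimalityGap

variable {n m p : ℕ} {A : Fin m → Matrix (Fin n) (Fin n) ℝ} {b : Fin m → ℝ}

lemma trace_mul_sub_trace_mul_eq_of_Aop_eq (C : Matrix (Fin n) (Fin n) ℝ) (μ : Fin m → ℝ)
    {X X' : Matrix (Fin n) (Fin n) ℝ} (h : Aop A X = Aop A X') :
    (C * X).trace - (C * X').trace
      = ((C - Aadj A μ) * X).trace - ((C - Aadj A μ) * X').trace := by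
  simp [Matrix.sub_mul, trace_Aadj_mul, h]

lemma two_mul_trace_gap_le_sub_minCurvature_mul_trace (C : Matrix (Fin n) (Fin n) ℝ) (μ : Fin m → ℝ)
    {Y : Matrix (Fin n) (Fin p) ℝ} (hY : Y ∈ facFeas A b p)
    {X : Matrix (Fin n) (Fin n) ℝ} (hX : X ∈ sdpFeas A b) :
    2 * ((C * (Y * Yᵀ)).trace - (C * X).trace)
      ≤ 2 * ((C - Aadj A μ) * (Y * Yᵀ)).trace
        - minCurvature A (C - Aadj A μ) (appendCol Y 0) * X.trace := by
  have hAop : Aop A (Y * Yᵀ) = Aop A X := Eq.trans hY hX.2.1.symm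
  have hgap := trace_mul_sub_trace_mul_eq_of_Aop_eq C μ hAop
  have hcurv := minCurvature_appendCol_mul_trace_le A (C - Aadj A μ) Y hX.2.2
  linarith

theorem optimality_gap_via_padded_point_constant_trace_general
    {R : ℝ} (htrace : ∀ X ∈ sdpFeas A b, X.trace = R) (hpd : ∃ X ∈ sdpFeas A b, X.PosDef)
    (C : Matrix (Fin n) (Fin n) ℝ) {Y : Matrix (Fin n) (Fin p) ℝ} (hY : Y ∈ facFeas A b p)
    {μ : Fin m → ℝ} (htan : (2 : ℝ) • ((C - Aadj A μ) * Y) ∈ tangentSet A Y) :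
    appendCol Y 0 ∈ facFeas A b (p + 1) ∧
    0 ≤ 2 * ((C * (Y * Yᵀ)).trace - fstar A b C) ∧
    2 * ((C * (Y * Yᵀ)).trace - fstar A b C)
      ≤ -(R * minCurvature A (C - Aadj A μ) (appendCol Y 0)) := by
  set lam := minCurvature A (C - Aadj A μ) (appendCol Y 0)
  have hYfeas := mul_transpose_self_mem_sdpFeas hY
  have hgrad : ((C - Aadj A μ) * (Y * Yᵀ)).trace = 0 := by
    simpa [Matrix.mul_assoc] using
      trace_mul_transpose_eq_zero_of_mem_tangentSet htrace hpd htan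
  have hlower : ∀ t ∈ (fun X => (C * X).trace) '' sdpFeas A b,
      (C * (Y * Yᵀ)).trace + R * lam / 2 ≤ t := by
    rintro _ ⟨X, hX, rfl⟩
    have hgap := two_mul_trace_gap_le_sub_minCurvature_mul_trace C μ hY hX
    rw [hgrad, htrace X hX] at hgap
    linarith
  have hfstar_le : fstar A b C ≤ (C * (Y * Yᵀ)).trace :=
    csInf_le ⟨_, hlower⟩ ⟨_, hYfeas, rfl⟩
  have hle_fstar : (C * (Y * Yᵀ)).trace + R * lam / 2 ≤ fstar A b C :=
    le_csInf ⟨_, _, hYfeas, rfl⟩ hlower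
  exact ⟨appendCol_zero_mem_facFeas hY, by linarith, by linarith⟩

end OptimalityGap

/-- when all feasible `X` have the same trace `R > 0` and a positive definite
feasible point exists, the optimality gap bound simplifies to `0 ≤ 2(f(Y) − f*) ≤ −R λ`. -/
theorem optimality_gap_via_padded_point_constant_trace
    (n m p : ℕ) (hn : 0 < n) (hm : 0 < m) (hp : 0 < p)
    (A : Fin m → Matrix (Fin n) (Fin n) ℝ) (hA : ∀ i, (A i).IsSymm) (b : Fin m → ℝ)
    (C : Matrix (Fin n) (Fin n) ℝ) (hC : C.IsSymm)
    (R : ℝ) (hRpos : 0 < R)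
    (htrace : ∀ X ∈ sdpFeas A b, X.trace = R)
    (hpd : ∃ X ∈ sdpFeas A b, X.PosDef)
    (Y : Matrix (Fin n) (Fin p) ℝ) (hY : Y ∈ facFeas A b p)
    (μ : Fin m → ℝ) (S : Matrix (Fin n) (Fin n) ℝ) (hS : S = C - Aadj A μ)
    (htan : (2 : ℝ) • (S * Y) ∈ tangentSet A Y)
    (Ytil : Matrix (Fin n) (Fin (p + 1)) ℝ)
    (hYtil : Ytil = Matrix.of fun i => Fin.snoc (Y i) (0 : ℝ))
    (lam : ℝ)
    (hlam : lam = sInf {t : ℝ | ∃ Zdot ∈ tangentSet A Ytil,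
      frobNorm Zdot = 1 ∧ t = 2 * frobInner Zdot (S * Zdot)}) :
    Ytil ∈ facFeas A b (p + 1) ∧
    0 ≤ 2 * ((C * (Y * Yᵀ)).trace - fstar A b C) ∧
    2 * ((C * (Y * Yᵀ)).trace - fstar A b C) ≤ -(R * lam) := by
  subst hS hYtil hlam
  exact optimality_gap_via_padded_point_constant_trace_general htrace hpd C hY htan

end
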